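/- arXiv:1004.0381 — 6 statements merged into one kernel-verified Lean document; each statement's English description precedes it below -/
import Mathlib

section
/- Let F be an M×M real matrix, Q an M×M symmetric positive semidefinite real matrix, and for i = 1,…,ℓ let f_{n_i} be the Riccati operator built from F, Q, an observation matrix C_{n_i} ∈ ℝ^{m_i×M} and a symmetric positive definite R_{n_i} ∈ ℝ^{m_i×m_i}. If the Grammian G = ∑_{i=1}^{ℓ} (F^{i−1})ᵀ C_{n_i}ᵀ C_{n_i} F^{i−1} is invertible, then there exists a constant α₀ > 0 such that f_{n_ℓ} ∘ f_{n_{ℓ−1}} ∘ ⋯ ∘ f_{n_1}(X) ⪯ α₀·I for every symmetric positive semidefinite M×M matrix X. -/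
open Matrix Finset

/-- The Riccati operator `f(X) = F X Fᵀ + Q − F X Cᵀ (C X Cᵀ + R)⁻¹ C X Fᵀ`. -/
noncomputable def riccatiMap {M m : ℕ} (F Q : Matrix (Fin M) (Fin M) ℝ)
    (C : Matrix (Fin m) (Fin M) ℝ) (R : Matrix (Fin m) (Fin m) ℝ)
    (X : Matrix (Fin M) (Fin M) ℝ) : Matrix (Fin M) (Fin M) ℝ :=
  F * X * Fᵀ + Q - F * X * Cᵀ * (C * X * Cᵀ + R)⁻¹ * (C * X * Fᵀ)

lemma exists_genInv {m M : ℕ} (A : Matrix (Fin m) (Fin M) ℝ) :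
    ∃ S : Matrix (Fin M) (Fin m) ℝ, A * S * A = A := by
  let f := Matrix.toLin' A
  obtain ⟨g, hg⟩ := f.rangeRestrict.exists_rightInverse_of_surjective (f.range_rangeRestrict)
  obtain ⟨h, hh⟩ := LinearMap.exists_extend g
  refine ⟨LinearMap.toMatrix' h, ?_⟩
  apply Matrix.toLin'.injective
  rw [Matrix.toLin'_mul, Matrix.toLin'_mul, Matrix.toLin'_toMatrix']
  refine LinearMap.ext fun y => ?_
  have h1 : h (f y) = g (f.rangeRestrict y) := by
    rw [← hh]; rfl
  have h3 := congrArg Subtype.val (LinearMap.congr_fun hg (f.rangeRestrict y))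
  change f (h (f y)) = f y
  rw [h1]
  exact h3

lemma riccati_identity {M m : ℕ} (F Q : Matrix (Fin M) (Fin M) ℝ)
    (C : Matrix (Fin m) (Fin M) ℝ) (R : Matrix (Fin m) (Fin m) ℝ) (hR : R.PosDef)
    (X : Matrix (Fin M) (Fin M) ℝ) (hX : X.PosSemidef) (K : Matrix (Fin M) (Fin m) ℝ) :
    (F - K * C) * X * (F - K * C)ᵀ + Q + K * R * Kᵀ - riccatiMap F Q C R X =
      (K - F * X * Cᵀ * (C * X * Cᵀ + R)⁻¹) * (C * X * Cᵀ + R) *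
        (K - F * X * Cᵀ * (C * X * Cᵀ + R)⁻¹)ᵀ := by
  have hXt : Xᵀ = X := by simpa using hX.1.eq
  have hRt : Rᵀ = R := by simpa using hR.1.eq
  have hpd : (C * X * Cᵀ + R).PosDef := by
    have := hX.mul_mul_conjTranspose_same C
    rw [conjTranspose_eq_transpose_of_trivial] at this
    exact Matrix.PosDef.posSemidef_add this hR
  have hS : R = (C * X * Cᵀ + R) - C * X * Cᵀ := by abel
  have hSt : (C * X * Cᵀ + R)ᵀ = C * X * Cᵀ + R := by simpa using hpd.1.eq
  have hu : IsUnit (C * X * Cᵀ + R).det := (Matrix.isUnit_iff_isUnit_det _).1 hpd.isUnit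
  unfold riccatiMap
  generalize (C * X * Cᵀ + R) = S at *
  subst hS
  have e1 : (F * X * Cᵀ * S⁻¹) * S = F * X * Cᵀ := Matrix.nonsing_inv_mul_cancel_right _ _ hu
  have e2 : (K - F * X * Cᵀ * S⁻¹)ᵀ = Kᵀ - S⁻¹ * (C * X * Fᵀ) := by
    simp [Matrix.transpose_mul, Matrix.transpose_nonsing_inv, hXt, hSt, Matrix.mul_assoc]
  have e3 : S * (S⁻¹ * (C * X * Fᵀ)) = C * X * Fᵀ := Matrix.mul_nonsing_inv_cancel_left _ _ hu
  have e4 : (K - F * X * Cᵀ * S⁻¹) * S * (Kᵀ - S⁻¹ * (C * X * Fᵀ)) =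
      K * S * Kᵀ - F * X * Cᵀ * Kᵀ - (K * (C * X * Fᵀ) - F * X * Cᵀ * S⁻¹ * (C * X * Fᵀ)) := by
    rw [Matrix.sub_mul K, e1, Matrix.mul_sub, Matrix.sub_mul, Matrix.sub_mul,
      Matrix.mul_assoc K S (S⁻¹ * _), e3, ← Matrix.mul_assoc _ S⁻¹]
  rw [e2, e4]
  simp only [Matrix.transpose_sub, Matrix.transpose_mul, Matrix.sub_mul, Matrix.mul_sub,
    Matrix.mul_assoc]
  abel

lemma riccati_le {M m : ℕ} (F Q : Matrix (Fin M) (Fin M) ℝ)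
    (C : Matrix (Fin m) (Fin M) ℝ) (R : Matrix (Fin m) (Fin m) ℝ) (hR : R.PosDef)
    (X : Matrix (Fin M) (Fin M) ℝ) (hX : X.PosSemidef) (K : Matrix (Fin M) (Fin m) ℝ) :
    ((F - K * C) * X * (F - K * C)ᵀ + Q + K * R * Kᵀ - riccatiMap F Q C R X).PosSemidef := by
  rw [riccati_identity F Q C R hR X hX K]
  have h1 := hX.mul_mul_conjTranspose_same C
  have h2 := (h1.add hR.posSemidef).mul_mul_conjTranspose_same
    (K - F * X * Cᵀ * (C * X * Cᵀ + R)⁻¹)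
  simpa only [conjTranspose_eq_transpose_of_trivial] using h2

lemma riccati_psd {M m : ℕ} (F Q : Matrix (Fin M) (Fin M) ℝ) (hQ : Q.PosSemidef)
    (C : Matrix (Fin m) (Fin M) ℝ) (R : Matrix (Fin m) (Fin m) ℝ) (hR : R.PosDef)
    (X : Matrix (Fin M) (Fin M) ℝ) (hX : X.PosSemidef) :
    (riccatiMap F Q C R X).PosSemidef := by
  have h := riccati_identity F Q C R hR X hX (F * X * Cᵀ * (C * X * Cᵀ + R)⁻¹)
  rw [sub_self, Matrix.zero_mul, Matrix.zero_mul, sub_eq_zero] at h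
  rw [← h]
  have h1 := hX.mul_mul_conjTranspose_same (F - (F * X * Cᵀ * (C * X * Cᵀ + R)⁻¹) * C)
  have h2 := hR.posSemidef.mul_mul_conjTranspose_same (F * X * Cᵀ * (C * X * Cᵀ + R)⁻¹)
  simp only [conjTranspose_eq_transpose_of_trivial] at h1 h2
  exact (h1.add hQ).add h2

section
open scoped MatrixOrder Matrix.Norms.L2Operator
lemma exists_scalar_bound {M : ℕ} (B : Matrix (Fin M) (Fin M) ℝ) (hB : B.PosSemidef) :
    ∃ a : ℝ, 0 < a ∧ (a • (1 : Matrix (Fin M) (Fin M) ℝ) - B).PosSemidef := by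
  refine ⟨B.trace + 1, by linarith [hB.trace_nonneg], ?_⟩
  have h : B ≤ algebraMap ℝ _ (B.trace + 1) := by
    rw [le_algebraMap_iff_spectrum_le (ha := hB.1)]
    intro x hx
    rw [hB.1.spectrum_real_eq_range_eigenvalues] at hx
    obtain ⟨i, rfl⟩ := hx
    have := hB.1.trace_eq_sum_eigenvalues
    have h2 := Finset.single_le_sum (f := hB.1.eigenvalues)
      (fun j _ => hB.eigenvalues_nonneg j) (Finset.mem_univ i)
    simp at this
    linarith
  rw [Matrix.le_iff, Algebra.algebraMap_eq_smul_one] at h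
  exact h
end

/-- Uniform boundedness of the composition of Riccati operators along a walk
whose Grammian `∑_{i=1}^{ℓ} (F^{i−1})ᵀ C_{n_i}ᵀ C_{n_i} F^{i−1}` is invertible:
there is `α₀ > 0` with `f_{n_ℓ} ∘ ⋯ ∘ f_{n_1}(X) ⪯ α₀ I` for every positive
semidefinite `X`.  The composition is encoded by the sequence `P` with
`P 0 = X` and `P (i+1) = f_{n_{i+1}}(P i)` (0-based indexing of the walk). -/
theorem riccati_walk_uniformly_bounded {M ℓ : ℕ} (hℓ : 0 < ℓ)
    (F Q : Matrix (Fin M) (Fin M) ℝ) (hQ : Q.PosSemidef)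
    (m : Fin ℓ → ℕ)
    (C : ∀ i : Fin ℓ, Matrix (Fin (m i)) (Fin M) ℝ)
    (R : ∀ i : Fin ℓ, Matrix (Fin (m i)) (Fin (m i)) ℝ)
    (hR : ∀ i, (R i).PosDef)
    (hGram : IsUnit (∑ i : Fin ℓ, (F ^ (i : ℕ))ᵀ * (C i)ᵀ * C i * F ^ (i : ℕ))) :
    ∃ α₀ : ℝ, 0 < α₀ ∧
      ∀ (X : Matrix (Fin M) (Fin M) ℝ), X.PosSemidef →
        ∀ P : ℕ → Matrix (Fin M) (Fin M) ℝ, P 0 = X →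
          (∀ i : Fin ℓ, P (i + 1) = riccatiMap F Q (C i) (R i) (P i)) →
          (α₀ • (1 : Matrix (Fin M) (Fin M) ℝ) - P ℓ).PosSemidef := by
  have key : ∀ k : ℕ, k ≤ ℓ → ∃ N B : Matrix (Fin M) (Fin M) ℝ, B.PosSemidef ∧
      (∀ j : Fin ℓ, (j : ℕ) < k → C j * F ^ (j : ℕ) * N = 0) ∧
      ∀ (X : Matrix (Fin M) (Fin M) ℝ), X.PosSemidef →
        ∀ P : ℕ → Matrix (Fin M) (Fin M) ℝ, P 0 = X →
          (∀ i : Fin ℓ, P (i + 1) = riccatiMap F Q (C i) (R i) (P i)) →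
          (P k).PosSemidef ∧ ((F ^ k * N) * X * (F ^ k * N)ᵀ + B - P k).PosSemidef := by
    intro k
    induction k with
    | zero =>
      intro _
      refine ⟨1, 0, Matrix.PosSemidef.zero, fun j hj => absurd hj (Nat.not_lt_zero _), ?_⟩
      intro X hX P h0 _
      subst h0
      refine ⟨hX, ?_⟩
      simpa using Matrix.PosSemidef.zero
    | succ k ih =>
      intro hk
      obtain ⟨N, B, hB, hN, hP⟩ := ih (by omega)
      let i : Fin ℓ := ⟨k, hk⟩
      obtain ⟨S, hS⟩ := exists_genInv (C i * F ^ k * N)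
      let K := F ^ (k + 1) * N * S
      have hRi := hR i
      have hΦ : F ^ (k + 1) * (N * (1 - S * (C i * F ^ k * N))) =
          (F - K * C i) * (F ^ k * N) := by
        simp only [K, Matrix.mul_sub, Matrix.sub_mul, Matrix.mul_one, pow_succ' F k,
          Matrix.mul_assoc]
      refine ⟨N * (1 - S * (C i * F ^ k * N)),
        (F - K * C i) * B * (F - K * C i)ᵀ + Q + K * R i * Kᵀ, ?_, ?_, ?_⟩
      · have h1 := hB.mul_mul_conjTranspose_same (F - K * C i)
        have h2 := hRi.posSemidef.mul_mul_conjTranspose_same K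
        simp only [conjTranspose_eq_transpose_of_trivial] at h1 h2
        exact (h1.add hQ).add h2
      · intro j hj
        rcases Nat.lt_succ_iff_lt_or_eq.1 hj with h | h
        · rw [← Matrix.mul_assoc, hN j h, Matrix.zero_mul]
        · have : j = i := Fin.ext h
          subst this
          change C i * F ^ k * (N * (1 - S * (C i * F ^ k * N))) = 0
          rw [← Matrix.mul_assoc, Matrix.mul_sub, Matrix.mul_one, ← Matrix.mul_assoc _ S, hS,
            sub_self]
      · intro X hX P h0 hrec
        obtain ⟨p1, p2⟩ := hP X hX P h0 hrec
        have hr : P (k + 1) = riccatiMap F Q (C i) (R i) (P k) := hrec i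
        rw [hr]
        refine ⟨riccati_psd F Q hQ _ _ hRi _ p1, ?_⟩
        have h1 := riccati_le F Q (C i) (R i) hRi _ p1 K
        have h2 := p2.mul_mul_conjTranspose_same (F - K * C i)
        rw [conjTranspose_eq_transpose_of_trivial] at h2
        have h3 := h2.add h1
        rw [hΦ]
        convert h3 using 1
        rw [Matrix.transpose_mul (F - K * C i) (F ^ k * N)]
        simp only [Matrix.mul_sub (F - K * C i), Matrix.mul_add (F - K * C i),
          Matrix.sub_mul _ _ (F - K * C i)ᵀ, Matrix.add_mul _ _ (F - K * C i)ᵀ]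
        simp only [Matrix.mul_assoc]
        abel
  obtain ⟨N, B, hB, hN, hP⟩ := key ℓ le_rfl
  have hG : (∑ i : Fin ℓ, (F ^ (i : ℕ))ᵀ * (C i)ᵀ * C i * F ^ (i : ℕ)) * N = 0 := by
    rw [Matrix.sum_mul]
    refine Finset.sum_eq_zero fun j _ => ?_
    rw [Matrix.mul_assoc, Matrix.mul_assoc, ← Matrix.mul_assoc (C j), hN j j.2, Matrix.mul_zero]
  have hN0 : N = 0 := (hGram.mul_right_eq_zero).1 hG
  obtain ⟨a, ha, hb⟩ := exists_scalar_bound B hB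
  refine ⟨a, ha, fun X hX P h0 hrec => ?_⟩
  have h := (hP X hX P h0 hrec).2
  rw [hN0] at h
  simp only [Matrix.mul_zero, Matrix.zero_mul, zero_add] at h
  have := hb.add h
  rwa [sub_add_sub_cancel] at this
end

section
/- The Riccati operator is order preserving: if X and Y are symmetric positive semidefinite M×M matrices with X ⪯ Y, then f(X) ⪯ f(Y). -/
open Matrix

/-- Completing the square in the gain `L`. -/
theorem riccatiMap_eq_gain {M m : ℕ} (F Q : Matrix (Fin M) (Fin M) ℝ)
    (C : Matrix (Fin m) (Fin M) ℝ) (R : Matrix (Fin m) (Fin m) ℝ)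
    (hR : R.PosDef) (X : Matrix (Fin M) (Fin M) ℝ) (hX : X.PosSemidef)
    (L : Matrix (Fin M) (Fin m) ℝ) :
    riccatiMap F Q C R X = (F - L * C) * X * (F - L * C)ᵀ + L * R * Lᵀ + Q
      - (L - F * X * Cᵀ * (C * X * Cᵀ + R)⁻¹) * (C * X * Cᵀ + R)
        * (L - F * X * Cᵀ * (C * X * Cᵀ + R)⁻¹)ᵀ := by
  have hS : (C * X * Cᵀ + R).PosDef := by
    have h := hX.mul_mul_conjTranspose_same C
    rw [conjTranspose_eq_transpose_of_trivial] at h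
    exact hR.posSemidef_add h
  have hXt : Xᵀ = X := by
    have h := hX.isHermitian.eq
    rwa [conjTranspose_eq_transpose_of_trivial] at h
  have hSt : (C * X * Cᵀ + R)ᵀ = C * X * Cᵀ + R := by
    have h := hS.isHermitian.eq
    rwa [conjTranspose_eq_transpose_of_trivial] at h
  have hdet : IsUnit (C * X * Cᵀ + R).det := (Matrix.isUnit_iff_isUnit_det _).1 hS.isUnit
  have hRS : R = (C * X * Cᵀ + R) - C * X * Cᵀ := by abel
  unfold riccatiMap
  generalize C * X * Cᵀ + R = S at *
  subst hRS
  have e1 : (L - F * X * Cᵀ * S⁻¹) * S = L * S - F * X * Cᵀ := by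
    rw [Matrix.sub_mul, Matrix.nonsing_inv_mul_cancel_right _ _ hdet]
  have e2 : (L - F * X * Cᵀ * S⁻¹)ᵀ = Lᵀ - S⁻¹ * (C * X * Fᵀ) := by
    simp only [transpose_sub, transpose_mul, transpose_transpose, transpose_nonsing_inv, hXt, hSt,
      Matrix.mul_assoc]
  have e3 : S * (S⁻¹ * (C * X * Fᵀ)) = C * X * Fᵀ :=
    Matrix.mul_nonsing_inv_cancel_left _ _ hdet
  rw [e1, e2]
  have e4 : (L * S - F * X * Cᵀ) * (Lᵀ - S⁻¹ * (C * X * Fᵀ)) =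
      L * S * Lᵀ - F * X * Cᵀ * Lᵀ - L * (C * X * Fᵀ)
        + F * X * Cᵀ * S⁻¹ * (C * X * Fᵀ) := by
    rw [Matrix.sub_mul, Matrix.mul_sub, Matrix.mul_sub, Matrix.mul_assoc L S (S⁻¹ * _), e3]
    simp only [Matrix.mul_assoc]
    abel
  rw [e4]
  simp only [transpose_sub, transpose_mul, Matrix.sub_mul, Matrix.mul_sub, Matrix.mul_assoc]
  abel

/-- The Riccati operator is order preserving w.r.t. the Loewner order:
if `X ⪯ Y` (i.e. `Y − X` is positive semidefinite), then `f(X) ⪯ f(Y)`. -/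
theorem riccati_order_preserving {M m : ℕ} (F Q : Matrix (Fin M) (Fin M) ℝ)
    (C : Matrix (Fin m) (Fin M) ℝ) (R : Matrix (Fin m) (Fin m) ℝ)
    (hQ : Q.PosSemidef) (hR : R.PosDef)
    (X Y : Matrix (Fin M) (Fin M) ℝ) (hX : X.PosSemidef) (hY : Y.PosSemidef)
    (hXY : (Y - X).PosSemidef) :
    (riccatiMap F Q C R Y - riccatiMap F Q C R X).PosSemidef := by
  have hS : (C * X * Cᵀ + R).PosDef := by
    have h := hX.mul_mul_conjTranspose_same C
    rw [conjTranspose_eq_transpose_of_trivial] at h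
    exact hR.posSemidef_add h
  have hfX := riccatiMap_eq_gain F Q C R hR X hX (F * Y * Cᵀ * (C * Y * Cᵀ + R)⁻¹)
  have hfY := riccatiMap_eq_gain F Q C R hR Y hY (F * Y * Cᵀ * (C * Y * Cᵀ + R)⁻¹)
  rw [sub_self, Matrix.zero_mul, Matrix.zero_mul, sub_zero] at hfY
  rw [hfX, hfY]
  generalize F * Y * Cᵀ * (C * Y * Cᵀ + R)⁻¹ = L
  have h1 := hXY.mul_mul_conjTranspose_same (F - L * C)
  have h2 := hS.posSemidef.mul_mul_conjTranspose_same (L - F * X * Cᵀ * (C * X * Cᵀ + R)⁻¹)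
  rw [conjTranspose_eq_transpose_of_trivial] at h1 h2
  have h3 := h1.add h2
  rw [Matrix.mul_sub, Matrix.sub_mul] at h3
  convert h3 using 1
  abel
end

section
/- The Riccati operator is concave on the positive semidefinite cone: for all symmetric positive semidefinite M×M matrices X, Y and every λ ∈ [0,1], f(λX + (1−λ)Y) ⪰ λ f(X) + (1−λ) f(Y). -/
open Matrix

/-- The quadratic form in the gain `L` whose minimum over `L` is the Riccati operator. -/
noncomputable def riccatiGain {M m : ℕ} (F Q : Matrix (Fin M) (Fin M) ℝ)
    (C : Matrix (Fin m) (Fin M) ℝ) (R : Matrix (Fin m) (Fin m) ℝ)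
    (L : Matrix (Fin M) (Fin m) ℝ)
    (X : Matrix (Fin M) (Fin M) ℝ) : Matrix (Fin M) (Fin M) ℝ :=
  F * X * Fᵀ + Q - L * (C * X * Fᵀ) - F * X * Cᵀ * Lᵀ + L * (C * X * Cᵀ + R) * Lᵀ

lemma riccati_innov_posDef {M m : ℕ} (C : Matrix (Fin m) (Fin M) ℝ) (R : Matrix (Fin m) (Fin m) ℝ)
    (hR : R.PosDef) (X : Matrix (Fin M) (Fin M) ℝ) (hX : X.PosSemidef) :
    (C * X * Cᵀ + R).PosDef := by
  have h := hX.mul_mul_conjTranspose_same C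
  rw [conjTranspose_eq_transpose_of_trivial] at h
  exact Matrix.PosDef.posSemidef_add h hR

lemma riccati_complete_square {M m : ℕ} (F Q : Matrix (Fin M) (Fin M) ℝ)
    (C : Matrix (Fin m) (Fin M) ℝ) (R : Matrix (Fin m) (Fin m) ℝ) (hR : R.PosDef)
    (L : Matrix (Fin M) (Fin m) ℝ) (X : Matrix (Fin M) (Fin M) ℝ) (hX : X.PosSemidef) :
    riccatiGain F Q C R L X - riccatiMap F Q C R X =
      (L - F * X * Cᵀ * (C * X * Cᵀ + R)⁻¹) * (C * X * Cᵀ + R) *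
        (L - F * X * Cᵀ * (C * X * Cᵀ + R)⁻¹)ᵀ := by
  have hS := riccati_innov_posDef C R hR X hX
  have hXt : Xᵀ = X := by
    have := hX.isHermitian.eq
    rwa [conjTranspose_eq_transpose_of_trivial] at this
  have hB : C * X * Fᵀ = (F * X * Cᵀ)ᵀ := by
    simp [transpose_mul, hXt, Matrix.mul_assoc]
  unfold riccatiGain riccatiMap
  rw [hB]
  generalize C * X * Cᵀ + R = S at *
  generalize F * X * Cᵀ = B at *
  have hSt : S⁻¹ᵀ = S⁻¹ := by
    have := hS.inv.isHermitian.eq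
    rwa [conjTranspose_eq_transpose_of_trivial] at this
  have hu : IsUnit S.det := (Matrix.isUnit_iff_isUnit_det S).1 hS.isUnit
  have e1 : B * S⁻¹ * S = B := by rw [Matrix.mul_assoc, nonsing_inv_mul _ hu, Matrix.mul_one]
  have e2 : L * S * (S⁻¹ * Bᵀ) = L * Bᵀ := by
    rw [Matrix.mul_assoc, ← Matrix.mul_assoc S, mul_nonsing_inv _ hu, Matrix.one_mul]
  rw [transpose_sub, transpose_mul, hSt, Matrix.sub_mul, e1, Matrix.mul_sub, Matrix.sub_mul,
    Matrix.sub_mul, e2, ← Matrix.mul_assoc B]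
  abel

lemma riccati_gain_sub_posSemidef {M m : ℕ} (F Q : Matrix (Fin M) (Fin M) ℝ)
    (C : Matrix (Fin m) (Fin M) ℝ) (R : Matrix (Fin m) (Fin m) ℝ) (hR : R.PosDef)
    (L : Matrix (Fin M) (Fin m) ℝ) (X : Matrix (Fin M) (Fin M) ℝ) (hX : X.PosSemidef) :
    (riccatiGain F Q C R L X - riccatiMap F Q C R X).PosSemidef := by
  rw [riccati_complete_square F Q C R hR L X hX, ← conjTranspose_eq_transpose_of_trivial (_ - _)]
  exact (riccati_innov_posDef C R hR X hX).posSemidef.mul_mul_conjTranspose_same _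

lemma riccati_gain_affine {M m : ℕ} (F Q : Matrix (Fin M) (Fin M) ℝ)
    (C : Matrix (Fin m) (Fin M) ℝ) (R : Matrix (Fin m) (Fin m) ℝ)
    (L : Matrix (Fin M) (Fin m) ℝ) (X Y : Matrix (Fin M) (Fin M) ℝ) (a : ℝ) :
    riccatiGain F Q C R L (a • X + (1 - a) • Y) =
      a • riccatiGain F Q C R L X + (1 - a) • riccatiGain F Q C R L Y := by
  unfold riccatiGain
  simp only [Matrix.mul_add, Matrix.add_mul, Matrix.mul_smul, Matrix.smul_mul]
  module

/-- Concavity of the Riccati operator on the positive semidefinite cone: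
`f(λX + (1−λ)Y) ⪰ λ f(X) + (1−λ) f(Y)` for `λ ∈ [0,1]`. -/
theorem riccati_concave {M m : ℕ} (F Q : Matrix (Fin M) (Fin M) ℝ)
    (C : Matrix (Fin m) (Fin M) ℝ) (R : Matrix (Fin m) (Fin m) ℝ)
    (hQ : Q.PosSemidef) (hR : R.PosDef)
    (X Y : Matrix (Fin M) (Fin M) ℝ) (hX : X.PosSemidef) (hY : Y.PosSemidef)
    (lam : ℝ) (hlam0 : 0 ≤ lam) (hlam1 : lam ≤ 1) :
    (riccatiMap F Q C R (lam • X + (1 - lam) • Y)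
      - (lam • riccatiMap F Q C R X + (1 - lam) • riccatiMap F Q C R Y)).PosSemidef := by
  have hl : 0 ≤ 1 - lam := by linarith
  have hZ : (lam • X + (1 - lam) • Y).PosSemidef := (hX.smul hlam0).add (hY.smul hl)
  obtain ⟨L, hL⟩ : ∃ L, riccatiMap F Q C R (lam • X + (1 - lam) • Y) =
      riccatiGain F Q C R L (lam • X + (1 - lam) • Y) := by
    refine ⟨F * (lam • X + (1 - lam) • Y) * Cᵀ * (C * (lam • X + (1 - lam) • Y) * Cᵀ + R)⁻¹,
      (sub_eq_zero.1 ((riccati_complete_square F Q C R hR _ _ hZ).trans ?_)).symm⟩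
    rw [sub_self, Matrix.zero_mul, Matrix.zero_mul]
  rw [hL, riccati_gain_affine]
  have h := ((riccati_gain_sub_posSemidef F Q C R hR L X hX).smul hlam0).add
    ((riccati_gain_sub_posSemidef F Q C R hR L Y hY).smul hl)
  convert h using 1
  module
end

section
/- The Riccati operator is sublinear: for every symmetric positive semidefinite M×M matrix X and every λ ∈ (0,1], λ f(X) ⪯ f(λX). Moreover, if Q is positive definite and λ ∈ (0,1), then f(λX) − λ f(X) is positive definite (strong sublinearity). -/
open Matrix

lemma riccati_inv_diff {m : ℕ} (S R : Matrix (Fin m) (Fin m) ℝ) (hS : S.PosDef) (hR : R.PosDef)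
    (l : ℝ) (h0 : 0 < l) (h1 : l ≤ 1) :
    (S⁻¹ - l • (l • S + (1 - l) • R)⁻¹).PosSemidef := by
  have h2 : 0 ≤ 1 - l := by linarith
  set U := l • S + (1 - l) • R with hU
  have hUp : U.PosDef := (hS.smul h0).add_posSemidef (hR.posSemidef.smul h2)
  have uS : IsUnit S.det := (Matrix.isUnit_iff_isUnit_det _).1 hS.isUnit
  have uU : IsUnit U.det := (Matrix.isUnit_iff_isUnit_det _).1 hUp.isUnit
  have key : U * S⁻¹ * U - l • U = (l * (1 - l)) • R + ((1 - l) ^ 2) • (R * S⁻¹ * R) := by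
    have e : U * S⁻¹ * U = l • U + (1 - l) • (l • R + (1 - l) • (R * S⁻¹ * R)) := by
      have e1 : U * S⁻¹ = l • 1 + (1 - l) • (R * S⁻¹) := by
        rw [hU, add_mul, smul_mul_assoc, smul_mul_assoc, Matrix.mul_nonsing_inv _ uS]
      have e2 : R * S⁻¹ * U = l • R + (1 - l) • (R * S⁻¹ * R) := by
        rw [hU, mul_add, mul_smul_comm, mul_smul_comm, Matrix.nonsing_inv_mul_cancel_right _ _ uS]
      rw [e1, add_mul, smul_mul_assoc, smul_mul_assoc, e2, one_mul]
    rw [e]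
    module
  have hmid : (U * S⁻¹ * U - l • U).PosSemidef := by
    rw [key]
    refine (hR.posSemidef.smul (mul_nonneg h0.le h2)).add (PosSemidef.smul ?_ (sq_nonneg _))
    have := hS.inv.posSemidef.mul_mul_conjTranspose_same R
    rwa [hR.isHermitian.eq] at this
  have h := hmid.mul_mul_conjTranspose_same U⁻¹
  rw [hUp.inv.isHermitian.eq] at h
  convert h using 1
  rw [mul_sub, sub_mul, mul_smul_comm, smul_mul_assoc, Matrix.nonsing_inv_mul _ uU, one_mul,
    mul_assoc U, Matrix.nonsing_inv_mul_cancel_left _ _ uU,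
    Matrix.mul_nonsing_inv_cancel_right _ _ uU]

lemma riccati_diff {M m : ℕ} (F Q : Matrix (Fin M) (Fin M) ℝ)
    (C : Matrix (Fin m) (Fin M) ℝ) (R : Matrix (Fin m) (Fin m) ℝ) (hR : R.PosDef)
    (X : Matrix (Fin M) (Fin M) ℝ) (hX : X.PosSemidef) (l : ℝ) (h0 : 0 < l) (h1 : l ≤ 1) :
    ∃ P : Matrix (Fin M) (Fin M) ℝ, P.PosSemidef ∧
      riccatiMap F Q C R (l • X) - l • riccatiMap F Q C R X = (1 - l) • Q + P := by
  have hS : (C * X * Cᵀ + R).PosDef := by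
    refine hR.posSemidef_add ?_
    simpa using hX.mul_mul_conjTranspose_same C
  have hd := riccati_inv_diff _ R hS hR l h0 h1
  have hU : l • (C * X * Cᵀ + R) + (1 - l) • R = C * (l • X) * Cᵀ + R := by
    rw [Matrix.mul_smul, Matrix.smul_mul]
    module
  rw [hU] at hd
  have hT : (F * X * Cᵀ)ᵀ = C * X * Fᵀ := by
    have : Xᵀ = X := by simpa using hX.isHermitian.eq
    rw [transpose_mul, transpose_mul, transpose_transpose, this, Matrix.mul_assoc]
  have h := (hd.mul_mul_conjTranspose_same (F * X * Cᵀ)).smul h0.le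
  rw [conjTranspose_eq_transpose_of_trivial, hT] at h
  refine ⟨_, h, ?_⟩
  unfold riccatiMap
  generalize (C * (l • X) * Cᵀ + R)⁻¹ = V
  generalize (C * X * Cᵀ + R)⁻¹ = W
  simp only [Matrix.mul_smul, Matrix.smul_mul, Matrix.mul_sub, Matrix.sub_mul]
  module

/-- Sublinearity of the Riccati operator: for `λ ∈ (0,1]`, `λ f(X) ⪯ f(λX)`;
moreover, if `Q` is positive definite and `λ ∈ (0,1)`, then `f(λX) − λ f(X)` is
positive definite (strong sublinearity). -/
theorem riccati_sublinear {M m : ℕ} (F Q : Matrix (Fin M) (Fin M) ℝ)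
    (C : Matrix (Fin m) (Fin M) ℝ) (R : Matrix (Fin m) (Fin m) ℝ)
    (hQ : Q.PosSemidef) (hR : R.PosDef)
    (X : Matrix (Fin M) (Fin M) ℝ) (hX : X.PosSemidef) :
    (∀ lam : ℝ, 0 < lam → lam ≤ 1 →
        (riccatiMap F Q C R (lam • X) - lam • riccatiMap F Q C R X).PosSemidef) ∧
      (Q.PosDef → ∀ lam : ℝ, 0 < lam → lam < 1 →
        (riccatiMap F Q C R (lam • X) - lam • riccatiMap F Q C R X).PosDef) := by
  refine ⟨fun l h0 h1 => ?_, fun hQ' l h0 h1 => ?_⟩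
  · obtain ⟨P, hP, e⟩ := riccati_diff F Q C R hR X hX l h0 h1
    rw [e]
    exact (hQ.smul (sub_nonneg.2 h1)).add hP
  · obtain ⟨P, hP, e⟩ := riccati_diff F Q C R hR X hX l h0 h1.le
    rw [e]
    exact (hQ'.smul (sub_pos.2 h1)).add_posSemidef hP
end

section
/- Let f_1,…,f_N be Riccati operators with common F (with operator norm α = ‖F‖ > 1) and common symmetric positive semidefinite Q, and suppose the walk (n₁,…,n_ℓ) is uniformly contracting: f_{n_ℓ} ∘ ⋯ ∘ f_{n_1}(X) ⪯ α₀·I for every symmetric positive semidefinite X, for some α₀ > 0. Let σ : ℕ → {1,…,N} be any switching sequence and define switched Riccati iterates P(t+1) = f_{σ(t)}(P(t)) from an arbitrary symmetric positive semidefinite P(0). If there exists t′ such that σ(t′+s−1) = n_s for s = 1,…,ℓ and t′ + ℓ ≤ t, then ‖P(t)‖ ≤ α^{2(t−t′−ℓ)} α₀ + ((α^{2(t−t′−ℓ)} − 1)/(α² − 1)) ‖Q‖. -/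
open Matrix Finset

/-- The operator (induced 2-) norm of a real square matrix. -/
noncomputable def opNorm {M : ℕ} (X : Matrix (Fin M) (Fin M) ℝ) : ℝ :=
  ‖LinearMap.toContinuousLinearMap (Matrix.toEuclideanLin X)‖

open scoped Matrix.Norms.L2Operator in
theorem opNorm_eq_l2 {M : ℕ} (X : Matrix (Fin M) (Fin M) ℝ) : opNorm X = ‖X‖ := rfl

theorem opNorm_mono {M : ℕ} {A B : Matrix (Fin M) (Fin M) ℝ} (hA : A.PosSemidef)
    (hAB : (B - A).PosSemidef) : opNorm A ≤ opNorm B := by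
  have hA' := Matrix.isPositive_toEuclideanLin_iff.mpr hA
  have hAB' := Matrix.isPositive_toEuclideanLin_iff.mpr hAB
  unfold opNorm
  rw [ContinuousLinearMap.norm_eq_iSup_rayleighQuotient
    (LinearMap.toContinuousLinearMap (Matrix.toEuclideanLin A)) hA'.isSymmetric]
  refine ciSup_le fun x => ?_
  refine le_trans ?_ (ContinuousLinearMap.rayleighQuotient_le_norm _ x)
  have h1 := hA'.inner_nonneg_left x
  have h2 := hAB'.inner_nonneg_left x
  rw [map_sub, LinearMap.sub_apply, inner_sub_left] at h2
  simp only [ContinuousLinearMap.rayleighQuotient, ContinuousLinearMap.reApplyInnerSelf_apply,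
    LinearMap.coe_toContinuousLinearMap', RCLike.re_to_real]
  rw [abs_of_nonneg (by positivity), abs_of_nonneg (div_nonneg (by linarith) (by positivity))]
  gcongr
  linarith

open scoped Matrix.Norms.L2Operator in
theorem opNorm_conj_add {M : ℕ} (F Q X : Matrix (Fin M) (Fin M) ℝ) :
    opNorm (F * X * Fᵀ + Q) ≤ opNorm F ^ 2 * opNorm X + opNorm Q := by
  simp only [opNorm_eq_l2]
  have hT : ‖Fᵀ‖ = ‖F‖ := by
    rw [← Matrix.conjTranspose_eq_transpose_of_trivial, Matrix.l2_opNorm_conjTranspose]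
  calc ‖F * X * Fᵀ + Q‖ ≤ ‖F * X * Fᵀ‖ + ‖Q‖ := norm_add_le _ _
    _ ≤ ‖F‖ * ‖X‖ * ‖Fᵀ‖ + ‖Q‖ := by
        gcongr
        refine (Matrix.l2_opNorm_mul _ _).trans ?_
        gcongr
        exact Matrix.l2_opNorm_mul _ _
    _ = _ := by rw [hT]; ring

theorem opNorm_smul_one {M : ℕ} {a : ℝ} (ha : 0 ≤ a) :
    opNorm (a • (1 : Matrix (Fin M) (Fin M) ℝ)) ≤ a := by
  unfold opNorm
  refine ContinuousLinearMap.opNorm_le_bound _ ha fun x => ?_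
  simp [norm_smul, abs_of_nonneg ha]

section step
variable {M m : ℕ} (F Q : Matrix (Fin M) (Fin M) ℝ)
    (C : Matrix (Fin m) (Fin M) ℝ) (R : Matrix (Fin m) (Fin m) ℝ)
    (X : Matrix (Fin M) (Fin M) ℝ)

theorem innov_posDef (hR : R.PosDef) (hX : X.PosSemidef) : (C * X * Cᵀ + R).PosDef := by
  have := hX.mul_mul_conjTranspose_same C
  rw [Matrix.conjTranspose_eq_transpose_of_trivial] at this
  exact Matrix.PosDef.posSemidef_add this hR

theorem riccati_upper (hR : R.PosDef) (hX : X.PosSemidef) :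
    (F * X * Fᵀ + Q - riccatiMap F Q C R X).PosSemidef := by
  have hS := (innov_posDef C R X hR hX).inv.posSemidef
  have h := hS.mul_mul_conjTranspose_same (F * X * Cᵀ)
  have hXt : Xᵀ = X := by
    rw [← Matrix.conjTranspose_eq_transpose_of_trivial]; exact hX.isHermitian
  have e : F * X * Fᵀ + Q - riccatiMap F Q C R X
      = F * X * Cᵀ * (C * X * Cᵀ + R)⁻¹ * (F * X * Cᵀ)ᴴ := by
    rw [riccatiMap, sub_sub_cancel, Matrix.conjTranspose_eq_transpose_of_trivial,
      Matrix.transpose_mul, Matrix.transpose_mul, Matrix.transpose_transpose, hXt,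
      Matrix.mul_assoc C X Fᵀ]
  rw [e]
  exact h

theorem riccati_posSemidef (hQ : Q.PosSemidef) (hR : R.PosDef) (hX : X.PosSemidef) :
    (riccatiMap F Q C R X).PosSemidef := by
  have hS := innov_posDef C R X hR hX
  have hXt : Xᵀ = X := by
    rw [← Matrix.conjTranspose_eq_transpose_of_trivial]; exact hX.isHermitian
  haveI : Invertible (C * X * Cᵀ + R) := hS.isUnit.invertible
  have hb : (X - (X * Cᵀ) * (C * X * Cᵀ + R)⁻¹ * (X * Cᵀ)ᴴ).PosSemidef := by
    set S := C * X * Cᵀ + R with hSdef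
    have hSt : Sᵀ = S := by
      rw [← Matrix.conjTranspose_eq_transpose_of_trivial]; exact hS.isHermitian
    have hSit : S⁻¹ᵀ = S⁻¹ := by rw [Matrix.transpose_nonsing_inv, hSt]
    set K := X * Cᵀ * S⁻¹ with hK
    have hKt : Kᵀ = S⁻¹ * (C * X) := by
      simp [hK, Matrix.transpose_mul, hSit, hXt]
    have hKS : K * S = X * Cᵀ := by
      rw [hK, Matrix.mul_assoc, Matrix.inv_mul_of_invertible, Matrix.mul_one]
    have h := (hX.mul_mul_conjTranspose_same (1 - K * C)).add
      (hR.posSemidef.mul_mul_conjTranspose_same K)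
    convert h using 1
    simp only [Matrix.conjTranspose_eq_transpose_of_trivial, Matrix.transpose_sub,
      Matrix.transpose_one, Matrix.transpose_mul, Matrix.transpose_transpose, hXt]
    have e1 : (1 - K * C) * X * (1 - Cᵀ * Kᵀ) + K * R * Kᵀ
        = X - K * (C * X) - X * Cᵀ * Kᵀ + K * S * Kᵀ := by
      rw [hSdef]
      simp only [Matrix.mul_add, Matrix.add_mul, Matrix.mul_sub, Matrix.sub_mul,
        Matrix.mul_one, Matrix.one_mul, Matrix.mul_assoc]
      abel
    rw [e1, hKS]
    noncomm_ring
  have h := (hb.mul_mul_conjTranspose_same F).add hQ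
  convert h using 1
  simp only [riccatiMap, Matrix.conjTranspose_eq_transpose_of_trivial, Matrix.transpose_mul,
    Matrix.transpose_transpose, hXt, Matrix.mul_assoc, Matrix.mul_sub, Matrix.sub_mul]
  abel
end step


/-- If the walk `(n₁,…,n_ℓ)` is uniformly contracting for the Riccati operators
`f_1,…,f_N` (common `F` with `α = ‖F‖ > 1` and common `Q`), and a switching sequence
`σ` contains this walk in the window `[t′, t′+ℓ)` with `t′ + ℓ ≤ t`, then the switched
Riccati iterates `P(t+1) = f_{σ(t)}(P(t))` satisfy
`‖P(t)‖ ≤ α^{2(t−t′−ℓ)} α₀ + ((α^{2(t−t′−ℓ)} − 1)/(α² − 1)) ‖Q‖`. -/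
theorem switched_riccati_norm_bound {M N ℓ : ℕ} (hℓ : 0 < ℓ)
    (F Q : Matrix (Fin M) (Fin M) ℝ) (hQ : Q.PosSemidef) (hF : 1 < opNorm F)
    (m : Fin N → ℕ)
    (C : ∀ n : Fin N, Matrix (Fin (m n)) (Fin M) ℝ)
    (R : ∀ n : Fin N, Matrix (Fin (m n)) (Fin (m n)) ℝ)
    (hR : ∀ n, (R n).PosDef)
    (w : Fin ℓ → Fin N) (α₀ : ℝ) (hα₀ : 0 < α₀)
    -- uniform contraction of the composition along the walk:
    (hcontr : ∀ (X : Matrix (Fin M) (Fin M) ℝ), X.PosSemidef →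
      ∀ Pc : ℕ → Matrix (Fin M) (Fin M) ℝ, Pc 0 = X →
        (∀ i : Fin ℓ, Pc (i + 1) = riccatiMap F Q (C (w i)) (R (w i)) (Pc i)) →
        (α₀ • (1 : Matrix (Fin M) (Fin M) ℝ) - Pc ℓ).PosSemidef)
    (σ : ℕ → Fin N)
    (P : ℕ → Matrix (Fin M) (Fin M) ℝ)
    (hP0 : (P 0).PosSemidef)
    (hrec : ∀ t, P (t + 1) = riccatiMap F Q (C (σ t)) (R (σ t)) (P t))
    (t' t : ℕ)
    (hwindow : ∀ i : Fin ℓ, σ (t' + i) = w i)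
    (ht : t' + ℓ ≤ t) :
    opNorm (P t) ≤ (opNorm F) ^ (2 * (t - t' - ℓ)) * α₀ +
      (((opNorm F) ^ (2 * (t - t' - ℓ)) - 1) / ((opNorm F) ^ 2 - 1)) * opNorm Q := by
  have hpsd : ∀ s, (P s).PosSemidef := by
    intro s
    induction s with
    | zero => exact hP0
    | succ k ih => rw [hrec]; exact riccati_posSemidef _ _ _ _ _ hQ (hR _) ih
  have hbase : opNorm (P (t' + ℓ)) ≤ α₀ := by
    have h := hcontr (P t') (hpsd t') (fun s => P (t' + s)) rfl (fun i => by
      have := hrec (t' + i)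
      rw [hwindow i] at this
      exact this)
    exact (opNorm_mono (hpsd _) h).trans (opNorm_smul_one hα₀.le)
  obtain ⟨d, rfl⟩ := Nat.exists_eq_add_of_le ht
  have hd : t' + ℓ + d - t' - ℓ = d := by omega
  rw [hd]
  clear hd ht
  have hpos : 0 < opNorm F ^ 2 - 1 := by nlinarith
  induction d with
  | zero => simpa using hbase
  | succ k ih =>
    have h1 : opNorm (P (t' + ℓ + (k + 1))) ≤ opNorm F ^ 2 * opNorm (P (t' + ℓ + k)) + opNorm Q := by
      refine (opNorm_mono (hpsd _) ?_).trans (opNorm_conj_add F Q _)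
      rw [← add_assoc, hrec]
      exact riccati_upper _ _ _ _ _ (hR _) (hpsd _)
    refine h1.trans ((add_le_add_left (mul_le_mul_of_nonneg_left ih (sq_nonneg _)) _).trans
      (le_of_eq ?_))
    field_simp
    ring
end

section
/- Let f_1,…,f_N be Riccati operators with common F and Q, let (σ_t)_{t≥0} be any measurable sequence of random involutive permutations of {1,…,N} on a probability space, and let P₀ be a fixed symmetric positive semidefinite matrix. Define the GIKF covariance iterates \hat P^n(0) = P₀, \hat P^n(t+1) = f_n(\hat P^{σ_t(n)}(t)), the particle locations p_n(0) = n, p_n(t) = σ_t(p_n(t−1)), and the particle iterates P_n(0) = P₀, P_n(t+1) = f_{p_n(t)}(P_n(t)). Let q be a random index uniformly distributed on {1,…,N} and independent of (σ_t)_{t≥0}. Then for every t ≥ 0 and every Borel set Γ of symmetric positive semidefinite M×M matrices, P(\hat P^q(t) ∈ Γ) = (1/N) ∑_{l=1}^{N} P(P_l(t) ∈ Γ). -/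
open Matrix MeasureTheory ProbabilityTheory

/-- The Borel measurable structure on real matrices (as a Pi type). -/
instance matrixMeasurableSpace {N M : ℕ} : MeasurableSpace (Matrix (Fin N) (Fin M) ℝ) :=
  inferInstanceAs (MeasurableSpace (Fin N → Fin M → ℝ))

/-- The discrete measurable structure on permutations of a finite set. -/
instance permMeasurableSpace {N : ℕ} : MeasurableSpace (Equiv.Perm (Fin N)) := ⊤

/-- The conditional error covariance of a uniformly randomly selected sensor has the
law of a uniformly mixed particle iterate:
`P(\hat P^q(t) ∈ Γ) = (1/N) ∑_{l=1}^N P(P_l(t) ∈ Γ)` for every Borel `Γ`. -/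
theorem random_sensor_law_is_mixture {Mdim N : ℕ} (hN : 0 < N)
    {Ω : Type} [MeasurableSpace Ω] (Pr : Measure Ω) [IsProbabilityMeasure Pr]
    (F Q : Matrix (Fin Mdim) (Fin Mdim) ℝ) (hQ : Q.PosSemidef)
    (m : Fin N → ℕ)
    (C : ∀ n : Fin N, Matrix (Fin (m n)) (Fin Mdim) ℝ)
    (R : ∀ n : Fin N, Matrix (Fin (m n)) (Fin (m n)) ℝ)
    (hR : ∀ n, (R n).PosDef)
    (σ : ℕ → Ω → Equiv.Perm (Fin N))
    (hσmeas : ∀ t, Measurable (σ t))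
    (hσinv : ∀ t ω, Function.Involutive (σ t ω))
    (P₀ : Matrix (Fin Mdim) (Fin Mdim) ℝ) (hP₀ : P₀.PosSemidef)
    (Phat : ℕ → Ω → Fin N → Matrix (Fin Mdim) (Fin Mdim) ℝ)
    (hPhat0 : ∀ ω n, Phat 0 ω n = P₀)
    (hPhat : ∀ t ω n, Phat (t + 1) ω n =
      riccatiMap F Q (C n) (R n) (Phat t ω (σ t ω n)))
    (p : ℕ → Ω → Fin N → Fin N)
    (hp0 : ∀ ω n, p 0 ω n = n)
    (hp : ∀ t ω n, p (t + 1) ω n = σ (t + 1) ω (p t ω n))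
    (Ppart : ℕ → Ω → Fin N → Matrix (Fin Mdim) (Fin Mdim) ℝ)
    (hPpart0 : ∀ ω n, Ppart 0 ω n = P₀)
    (hPpart : ∀ t ω n, Ppart (t + 1) ω n =
      riccatiMap F Q (C (p t ω n)) (R (p t ω n)) (Ppart t ω n))
    (q : Ω → Fin N)
    (hqmeas : Measurable q)
    (hquniform : ∀ i : Fin N, (Pr {ω | q ω = i}).toReal = 1 / (N : ℝ))
    (hqindep : IndepFun q (fun ω => fun t : ℕ => σ t ω) Pr) :
    ∀ (t : ℕ) (Γ : Set (Matrix (Fin Mdim) (Fin Mdim) ℝ)), MeasurableSet Γ →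
      (Pr {ω | Phat t ω (q ω) ∈ Γ}).toReal =
        (1 / (N : ℝ)) * ∑ l : Fin N, (Pr {ω | Ppart t ω l ∈ Γ}).toReal := by
  classical
  -- the sensor events are determined measurably by the switching sequence
  have hB : ∀ t (S : Set (Fin N → Matrix (Fin Mdim) (Fin Mdim) ℝ)),
      ∃ B : Set (ℕ → Equiv.Perm (Fin N)), MeasurableSet B ∧
        ∀ ω, (Phat t ω ∈ S ↔ (fun s => σ s ω) ∈ B) := by
    intro t
    induction t with
    | zero =>
      intro S
      refine ⟨{_s | (fun _ => P₀) ∈ S}, MeasurableSet.const _, fun ω => ?_⟩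
      have : Phat 0 ω = fun _ => P₀ := funext (hPhat0 ω)
      rw [this]
      rfl
    | succ t ih =>
      intro S
      choose B hBm hB using fun π : Equiv.Perm (Fin N) =>
        ih {x | (fun n => riccatiMap F Q (C n) (R n) (x (π n))) ∈ S}
      refine ⟨⋃ π, ((fun s : ℕ → Equiv.Perm (Fin N) => s t) ⁻¹' {π}) ∩ B π, ?_, ?_⟩
      · refine MeasurableSet.iUnion fun π => MeasurableSet.inter ?_ (hBm π)
        exact (measurable_pi_apply t) (MeasurableSpace.measurableSet_top)
      · intro ω
        have h1 : Phat (t + 1) ω =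
            fun n => riccatiMap F Q (C n) (R n) (Phat t ω (σ t ω n)) := funext (hPhat t ω)
        have h2 := hB (σ t ω) ω
        simp only [Set.mem_setOf_eq] at h2
        rw [h1, h2]
        simp
  have hσall : Measurable (fun ω => fun t : ℕ => σ t ω) := measurable_pi_lambda _ hσmeas
  -- relation between the two families
  have hrel : ∀ t ω l, Phat (t + 1) ω (p t ω l) = Ppart (t + 1) ω l := by
    intro t ω l
    induction t with
    | zero => rw [hPhat, hPpart, hPhat0, hPpart0]
    | succ t ih =>
      rw [hPhat, hPpart (t + 1), ← ih]
      congr 2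
      rw [hp, hσinv]
  have hinj : ∀ t ω, Function.Injective (p t ω) := by
    intro t ω
    induction t with
    | zero => intro a b h; simpa [hp0] using h
    | succ t ih => intro a b h; rw [hp, hp] at h; exact ih ((σ (t + 1) ω).injective h)
  have hpm : ∀ t l i, MeasurableSet {ω | p t ω l = i} := by
    intro t l
    induction t with
    | zero => intro i; simp only [hp0]; exact MeasurableSet.const _
    | succ t ih =>
      intro i
      have : {ω | p (t + 1) ω l = i} =
          ⋃ π : Equiv.Perm (Fin N), (σ (t + 1) ⁻¹' {π}) ∩ {ω | p t ω l = π.symm i} := by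
        ext ω
        simp [hp, Equiv.eq_symm_apply]
      rw [this]
      exact MeasurableSet.iUnion fun π =>
        (hσmeas (t + 1) MeasurableSpace.measurableSet_top).inter (ih _)
  intro t Γ _
  choose B hBm hBB using fun n : Fin N => hB t {x | x n ∈ Γ}
  have hA : ∀ n, {ω | Phat t ω n ∈ Γ} = (fun ω => fun t : ℕ => σ t ω) ⁻¹' B n := by
    intro n; ext ω; exact hBB n ω
  have hAm : ∀ n, MeasurableSet {ω | Phat t ω n ∈ Γ} := fun n => by
    rw [hA]; exact hσall (hBm n)
  -- bijection at time t
  have hbij : ∃ r : Ω → Fin N → Fin N, (∀ ω, Function.Injective (r ω)) ∧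
      (∀ l i, MeasurableSet {ω | r ω l = i}) ∧ ∀ ω l, Phat t ω (r ω l) = Ppart t ω l := by
    cases t with
    | zero => exact ⟨p 0, hinj 0, hpm 0, fun ω l => by rw [hPhat0, hPpart0]⟩
    | succ t => exact ⟨p t, hinj t, hpm t, hrel t⟩
  obtain ⟨r, hri, hrm, hr⟩ := hbij
  have hPm : ∀ l, MeasurableSet {ω | Ppart t ω l ∈ Γ} := by
    intro l
    have : {ω | Ppart t ω l ∈ Γ} = ⋃ i, {ω | r ω l = i} ∩ {ω | Phat t ω i ∈ Γ} := by
      ext ω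
      simp [← hr]
    rw [this]
    exact MeasurableSet.iUnion fun i => (hrm l i).inter (hAm i)
  have hsum : ∑ l, Pr {ω | Ppart t ω l ∈ Γ} = ∑ n, Pr {ω | Phat t ω n ∈ Γ} := by
    simp_rw [← fun l => lintegral_indicator_one (μ := Pr) (hPm l),
      ← fun l => lintegral_indicator_one (μ := Pr) (hAm l)]
    rw [← lintegral_finsetSum _ fun l _ => measurable_one.indicator (hPm l),
      ← lintegral_finsetSum _ fun l _ => measurable_one.indicator (hAm l)]
    congr 1
    ext ω
    symm
    rw [← Equiv.sum_comp (Equiv.ofBijective (r ω) (Finite.injective_iff_bijective.mp (hri ω)))]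
    simp [Set.indicator_apply, hr]
  have hq : Pr {ω | Phat t ω (q ω) ∈ Γ} =
      ∑ n, Pr {ω | q ω = n} * Pr {ω | Phat t ω n ∈ Γ} := by
    have h1 : {ω | Phat t ω (q ω) ∈ Γ} = ⋃ n, ({ω | q ω = n} ∩ {ω | Phat t ω n ∈ Γ}) := by
      ext ω
      simp
    rw [h1, measure_iUnion, tsum_fintype]
    · refine Finset.sum_congr rfl fun n _ => ?_
      rw [hA]
      exact hqindep.measure_inter_preimage_eq_mul {n} (B n) (measurableSet_singleton n) (hBm n)
    · intro a b hab
      refine Set.disjoint_left.mpr fun ω ha hb => hab ?_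
      exact ha.1.symm.trans hb.1
    · exact fun n => (hqmeas (measurableSet_singleton n)).inter (hAm n)
  have hsum' : ∑ l, (Pr {ω | Ppart t ω l ∈ Γ}).toReal =
      ∑ n, (Pr {ω | Phat t ω n ∈ Γ}).toReal := by
    rw [← ENNReal.toReal_sum (by finiteness), hsum, ENNReal.toReal_sum (by finiteness)]
  rw [hq, ENNReal.toReal_sum (by finiteness), hsum', Finset.mul_sum]
  refine Finset.sum_congr rfl fun n _ => ?_
  rw [ENNReal.toReal_mul, hquniform]
end
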